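/- arXiv:0907.1038 — 2 statements merged into one kernel-verified Lean document; each statement's English description precedes it below -/
import Mathlib

section
/- Let n ≥ 1 and let ∼ be an equivalence relation on {1, 2, …, n} which is non-crossing (there are no indices a < b < c < d with a ∼ c, b ∼ d, and a ≁ b) and in which no equivalence class contains four consecutive integers i, i+1, i+2, i+3. Then the number of equivalence classes of ∼ is at least n/6 + 1/2. -/
open Classical in
theorem bead_aux {Q : Type*} [Fintype Q] (n : ℕ) (hn : 1 ≤ n) (c : ℕ → Q)
    (nc : ∀ a b d e : ℕ, a < b → b < d → d < e → e < n → c a = c d → c b = c e → c a = c b)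
    (nf : ∀ a, a + 3 < n → ¬ (c a = c (a+1) ∧ c a = c (a+2) ∧ c a = c (a+3))) :
    n + 3 ≤ 6 * Fintype.card Q := by
  have hb : ∀ j : ℕ, ∃ b, j < (n-1)/3 → b / 3 = j ∧ b + 1 < n ∧ c b ≠ c (b+1) := by
    intro j
    by_cases hj : j < (n-1)/3
    · have h := nf (3*j) (by omega)
      by_cases h1 : c (3*j) = c (3*j+1)
      · by_cases h2 : c (3*j+1) = c (3*j+2)
        · refine ⟨3*j+2, fun _ => ⟨by omega, by omega, fun h3 => h ⟨h1, h1.trans h2, ?_⟩⟩⟩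
          exact (h1.trans h2).trans h3
        · exact ⟨3*j+1, fun _ => ⟨by omega, by omega, h2⟩⟩
      · exact ⟨3*j, fun _ => ⟨by omega, by omega, h1⟩⟩
    · exact ⟨0, fun h => absurd h hj⟩
  choose b hb using hb
  let F : ℕ → Prop := fun i => ∀ a < i, c a ≠ c i
  have hlast : ∀ i, i + 1 < n → c i ≠ c (i+1) → ¬ F (i+1) → ∀ e, i < e → e < n → c i ≠ c e := by
    intro i hi hne hF e he hen heq
    simp only [F, not_forall, not_not] at hF
    obtain ⟨a, ha, hac⟩ := hF
    have h1 : a ≠ i := by rintro rfl; exact hne hac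
    have h2 : e ≠ i + 1 := by rintro rfl; exact hne heq
    have := nc a i (i+1) e (by omega) (by omega) (by omega) hen hac heq
    exact hne (this.symm.trans hac)
  let g : ℕ → Q ⊕ Q := fun j => if F (b j + 1) then Sum.inl (c (b j + 1)) else Sum.inr (c (b j))
  have hcard := Finset.card_le_card_of_injOn (s := Finset.range ((n-1)/3))
    (t := (Finset.univ.erase (c 0)).disjSum (Finset.univ.erase (c (n-1)))) g
    (by
      intro j hj
      have hj : j < (n-1)/3 := by simpa using hj
      obtain ⟨h1, h2, h3⟩ := hb j hj
      by_cases hF : F (b j + 1)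
      · simpa [g, hF] using (hF 0 (by omega)).symm
      · simpa [g, hF] using hlast _ h2 h3 hF (n-1) (by omega) (by omega))
    (by
      intro j hj k hk hg
      have hj : j < (n-1)/3 := by simpa using hj
      have hk : k < (n-1)/3 := by simpa using hk
      obtain ⟨h1, h2, h3⟩ := hb j hj
      obtain ⟨k1, k2, k3⟩ := hb k hk
      suffices b j = b k by rw [← h1, ← k1, this]
      by_cases hF : F (b j + 1) <;> by_cases hG : F (b k + 1) <;> simp [g, hF, hG] at hg
      · rcases lt_trichotomy (b j) (b k) with h | h | h
        · exact absurd hg (hG _ (by omega))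
        · exact h
        · exact absurd hg.symm (hF _ (by omega))
      · rcases lt_trichotomy (b j) (b k) with h | h | h
        · exact absurd hg (hlast _ h2 h3 hF _ h (by omega))
        · exact h
        · exact absurd hg.symm (hlast _ k2 k3 hG _ h (by omega)))
  have hpos : 0 < Fintype.card Q := Fintype.card_pos_iff.mpr ⟨c 0⟩
  simp [Finset.card_disjSum, Finset.card_erase_of_mem] at hcard
  omega

/-- Bead-counting sublemma from the Curve length lemma: a non-crossing
equivalence relation on `{1,…,n}` with no equivalence class containing four
consecutive integers has at least `n/6 + 1/2` equivalence classes. -/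
theorem stmt_0 (n : ℕ) (hn : 1 ≤ n) (s : Setoid (Fin n))
    (noncross : ∀ a b c d : Fin n, a < b → b < c → c < d →
      s.r a c → s.r b d → s.r a b)
    (nofour : ∀ a b c d : Fin n, (b : ℕ) = a + 1 → (c : ℕ) = a + 2 →
      (d : ℕ) = a + 3 → ¬ (s.r a b ∧ s.r a c ∧ s.r a d)) :
    ((Nat.card (Quotient s) : ℚ)) ≥ n / 6 + 1 / 2 := by
  classical
  have : Fintype (Quotient s) := Fintype.ofFinite _
  let c : ℕ → Quotient s := fun i => if h : i < n then Quotient.mk s ⟨i, h⟩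
    else Quotient.mk s ⟨0, hn⟩
  have hc : ∀ i j (hi : i < n) (hj : j < n), c i = c j ↔ s.r ⟨i, hi⟩ ⟨j, hj⟩ := by
    intro i j hi hj
    simp only [c, hi, hj, dif_pos]
    exact Quotient.eq
  have key := bead_aux n hn c
    (by
      intro a b d e h1 h2 h3 h4 h5 h6
      rw [hc _ _ (by omega) (by omega)] at h5 h6 ⊢
      exact noncross _ _ _ _ h1 h2 h3 h5 h6)
    (by
      intro a ha
      rw [hc a (a+1) (by omega) (by omega), hc a (a+2) (by omega) (by omega),
        hc a (a+3) (by omega) (by omega)]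
      exact nofour _ _ _ _ rfl rfl rfl)
  rw [Nat.card_eq_fintype_card]
  have : (n : ℚ) + 3 ≤ 6 * (Fintype.card (Quotient s) : ℚ) := by exact_mod_cast key
  linarith
end

section
/- Let f : ℕ → ℚ satisfy f(0) ≥ 0 and f(1) ≥ 1, f(2) ≥ 1, f(3) ≥ 1, and suppose that for every k ≥ 4 there exist an integer t ≥ 1 and nonnegative integers l₁, …, l_t with l₁ + ⋯ + l_t = k − t, such that the number of indices i with l_i > 0 is at least ⌊(t−1)/3⌋ and f(k) ≥ 1 + f(l₁) + ⋯ + f(l_t). Then for every k ≥ 1, f(k) ≥ k/6 + 1/2. -/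
/-- The recursion satisfied by `nr(k)` in the proof of the Curve length lemma
implies the lower bound `nr(k) ≥ k/6 + 1/2` for all `k ≥ 1`. -/
theorem stmt_1 (f : ℕ → ℚ) (h0 : f 0 ≥ 0) (h1 : f 1 ≥ 1) (h2 : f 2 ≥ 1)
    (h3 : f 3 ≥ 1)
    (hrec : ∀ k : ℕ, 4 ≤ k → ∃ (t : ℕ) (l : Fin t → ℕ), 1 ≤ t ∧
      (∑ i, l i) + t = k ∧
      (t - 1) / 3 ≤ (Finset.univ.filter (fun i => 0 < l i)).card ∧
      f k ≥ 1 + ∑ i, f (l i)) :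
    ∀ k : ℕ, 1 ≤ k → f k ≥ (k : ℚ) / 6 + 1 / 2 := by

  intro k
  induction k using Nat.strong_induction_on with
  | _ k ih =>
    intro hk
    by_cases h4 : 4 ≤ k
    · obtain ⟨t, l, ht, hsum, hcard, hf⟩ := hrec k h4
      have hlow : ∑ i, ((l i : ℚ) / 6 + (if 0 < l i then (1 / 2 : ℚ) else 0)) ≤ ∑ i, f (l i) := by
        apply Finset.sum_le_sum
        intro i _
        have hi : l i ≤ ∑ j, l j :=
          Finset.single_le_sum (f := l) (fun _ _ => Nat.zero_le _) (Finset.mem_univ i)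
        by_cases hp : 0 < l i
        · simpa [hp] using ih (l i) (by omega) hp
        · have hz : l i = 0 := by omega
          simpa [hz] using h0
      rw [Finset.sum_add_distrib, ← Finset.sum_div, ← Finset.sum_filter, Finset.sum_const,
        nsmul_eq_mul] at hlow
      have ht3 : t ≤ 3 * (Finset.univ.filter (fun i => 0 < l i)).card + 3 := by omega
      have ht3q : (t : ℚ) ≤ 3 * ((Finset.univ.filter (fun i => 0 < l i)).card : ℚ) + 3 := by
        exact_mod_cast ht3
      have hsq : (∑ i, (l i : ℚ)) + t = k := by exact_mod_cast hsum
      linarith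
    · have : k = 1 ∨ k = 2 ∨ k = 3 := by omega
      rcases this with rfl | rfl | rfl <;> norm_num <;> linarith
end
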